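/- Let R be a regular local ring of Krull dimension 2, let M be a finitely generated torsion-free R-module of rank 2, and let A ⊆ M be a submodule of rank 1 such that B := M/A is torsion-free. Regard A as a submodule of the bidual M^{∨∨} via the (injective) evaluation map ε_M, and set N := (M^{∨∨}/A)/Tors(M^{∨∨}/A), where Tors denotes the torsion submodule. Then the canonical injection β : B → N induced by the inclusion M ⊆ M^{∨∨} is injective, and there is an exact sequence of finite-length R-modules 0 → A^{∨∨}/A → M^{∨∨}/M → B^{∨∨}/B → N^{∨∨}/N → 0, in which the first map is induced by the bidual of the inclusion A → M, the second by the bidual of the projection M → B, and the third by the bidual of β. -/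

import Mathlib

/-!
Statement 2 (local form of Proposition 3.1 of the paper): over a regular local ring of Krull
dimension 2, for a rank 2 finitely generated torsion-free module `M` and a rank 1 submodule
`A ⊆ M` with torsion-free quotient `B = M ⧸ A`, setting
`N := (M^{∨∨}/A)/Tors(M^{∨∨}/A)`, the canonical map `β : B → N` is injective and there is an
exact sequence of finite-length modules
`0 → A^{∨∨}/A → M^{∨∨}/M → B^{∨∨}/B → N^{∨∨}/N → 0`
whose maps are induced by the biduals of `A ↪ M`, `M ↠ B` and `β`.
-/

open Module LinearMap

/-- The cokernel `P^{∨∨}/P` of the canonical evaluation map `ε_P : P → P^{∨∨}`. -/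
abbrev evalCoker (R : Type*) [CommRing R] (P : Type*) [AddCommGroup P] [Module R P] :=
  Dual R (Dual R P) ⧸ LinearMap.range (Module.Dual.eval R P)

/-!
Two facts over a Noetherian normal domain drive the proof. For `P` finite and torsion-free, the
cokernel of `ε_P` is pseudo-null, because the localization of `P` at a prime of height at most one
is free. And the dual of an injection with pseudo-null cokernel is bijective, because `c ∣ x` as
soon as `c ∣ i * x` for all `i` in an ideal contained in no prime of height at most one.

Hence the sequence `0 → A^{∨∨} → M^{∨∨} → B^{∨∨}` is exact: `A` has pseudo-null cokernel in the
kernel of the second map. The map `β` is a quotient of `ε_M` up to torsion, so its cokernel is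
pseudo-null and `β^{∨∨}` is an isomorphism which identifies `M^{∨∨} → B^{∨∨}` with
`M^{∨∨} → N ⊆ N^{∨∨}`. A diagram chase then gives the exact sequence of cokernels. In dimension two
pseudo-null means finite length, and a regular local ring of dimension two is factorial, hence
normal.
-/

open IsLocalRing nonZeroDivisors

section RegularLocalRing

variable {R : Type*} [CommRing R] [IsNoetherianRing R] [IsLocalRing R]

theorem eq_span_singleton_of_le_span_pair {P : Ideal R} (hP : P.IsPrime) {x y : R} (hx : x ∈ P)
    (hy : y ∉ P) (hym : y ∈ maximalIdeal R) (hle : P ≤ Ideal.span {x, y}) :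
    P = Ideal.span {x} := by
  refine le_antisymm ?_ (P.span_singleton_le_iff_mem.2 hx)
  refine Submodule.le_of_le_smul_of_le_jacobson_bot P.fg_of_isNoetherianRing
    (maximalIdeal_le_jacobson ⊥) fun z hz => ?_
  obtain ⟨r, s, rfl⟩ := Ideal.mem_span_pair.1 (hle hz)
  have hsy : s * y ∈ P := (P.add_mem_iff_right (P.mul_mem_left r hx)).1 hz
  have hs : s ∈ P := (hP.mem_or_mem hsy).resolve_right hy
  rw [mul_comm s y]
  exact Submodule.add_mem_sup (Ideal.mem_span_singleton'.2 ⟨r, rfl⟩)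
    (Submodule.smul_mem_smul hym hs)

theorem isPrincipal_of_isPrincipal_map_quotient {P : Ideal R} (hP : P.IsPrime) {a : R}
    (ha : a ∉ P) (ham : a ∈ maximalIdeal R)
    (h : (P.map (Ideal.Quotient.mk (Ideal.span {a}))).IsPrincipal) : P.IsPrincipal := by
  obtain ⟨x', hx'⟩ := h.principal
  obtain ⟨x, hx, rfl⟩ := (Ideal.mem_map_iff_of_surjective _ Ideal.Quotient.mk_surjective).1
    (hx'.ge (Submodule.mem_span_singleton_self x'))
  refine ⟨x, eq_span_singleton_of_le_span_pair hP hx ha ham ?_⟩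
  have := Ideal.le_comap_of_map_le hx'.le
  rwa [Ideal.submodule_span_eq, ← Set.image_singleton, ← Ideal.map_span, Ideal.comap_map_quotientMk,
    ← Ideal.span_union, Set.union_comm] at this

variable {a b : R}

theorem prime_of_span_pair_eq_maximalIdeal (hdim : 1 < (maximalIdeal R).height)
    (hab : Ideal.span {a, b} = maximalIdeal R) : Prime a := by
  have ham : a ∈ maximalIdeal R := hab ▸ Ideal.mem_span_pair.2 ⟨1, 0, by simp⟩
  have hbm : b ∈ maximalIdeal R := hab ▸ Ideal.mem_span_pair.2 ⟨0, 1, by simp⟩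
  obtain ⟨P, hPmin, hPm⟩ := Ideal.exists_minimalPrimes_le
    ((maximalIdeal R).span_singleton_le_iff_mem.2 ham)
  have hP : P.IsPrime := hPmin.1.1
  have haP : a ∈ P := hPmin.1.2 (Ideal.mem_span_singleton_self a)
  have hbP : b ∉ P := fun hbP => by
    have hmP : maximalIdeal R ≤ P := hab ▸ Ideal.span_le.2 (Set.pair_subset haP hbP)
    exact hdim.not_ge <| (Ideal.height_mono hmP).trans <|
      Ideal.height_le_one_of_isPrincipal_of_mem_minimalPrimes _ P hPmin
  have ha : a ≠ 0 := by
    rintro rfl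
    rw [Ideal.span_insert_zero] at hab
    exact hdim.not_ge (hab ▸ Ideal.height_span_singleton_le_one (by simpa using hbm))
  have hPa : P = Ideal.span {a} :=
    eq_span_singleton_of_le_span_pair hP haP hbP hbm (hPm.trans hab.ge)
  exact (Ideal.span_singleton_prime ha).1 (hPa ▸ hP)

theorem isPrincipalIdealRing_quotient_span_singleton (ha : Prime a)
    (hab : Ideal.span {a, b} = maximalIdeal R) :
    IsPrincipalIdealRing (R ⧸ Ideal.span {a}) := by
  have : (Ideal.span {a}).IsPrime := (Ideal.span_singleton_prime ha.ne_zero).2 ha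
  have : IsLocalRing (R ⧸ Ideal.span {a}) := .of_surjective' _ Ideal.Quotient.mk_surjective
  have hmax : (maximalIdeal (R ⧸ Ideal.span {a})).IsPrincipal := by
    refine ⟨Ideal.Quotient.mk _ b, ?_⟩
    rw [← map_maximalIdeal_of_surjective (Ideal.Quotient.mk (Ideal.span {a}))
      Ideal.Quotient.mk_surjective, ← hab, Ideal.map_span, Set.image_pair,
      Ideal.Quotient.eq_zero_iff_mem.2 (Ideal.mem_span_singleton_self a), Ideal.span_insert_zero,
      Ideal.submodule_span_eq]
  exact ((tfae_of_isNoetherianRing_of_isLocalRing_of_isDomain _).out 4 0).1 hmax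

theorem uniqueFactorizationMonoid_of_span_pair_eq_maximalIdeal [IsDomain R]
    (hdim : 1 < (maximalIdeal R).height) (hab : Ideal.span {a, b} = maximalIdeal R) :
    UniqueFactorizationMonoid R := by
  have ha : Prime a := prime_of_span_pair_eq_maximalIdeal hdim hab
  have := isPrincipalIdealRing_quotient_span_singleton ha hab
  refine UniqueFactorizationMonoid.iff_exists_prime_mem_of_isPrime.2 fun P hP0 hP => ?_
  by_cases haP : a ∈ P
  · exact ⟨a, haP, ha⟩
  · have ham : a ∈ maximalIdeal R := hab ▸ Ideal.mem_span_pair.2 ⟨1, 0, by simp⟩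
    have := isPrincipal_of_isPrincipal_map_quotient hP haP ham
      (IsPrincipalIdealRing.principal _)
    exact ⟨_, Submodule.IsPrincipal.generator_mem P,
      Submodule.IsPrincipal.prime_generator_of_isPrime P hP0⟩

end RegularLocalRing

section PseudoNull

/-- Pseudo-null modules in the sense of Bourbaki: those supported in codimension at least two. The
support is replaced by the vanishing locus of the annihilator, which agrees with it for finite
modules and needs no localization. -/
def IsPseudoNull (R Q : Type*) [CommRing R] [AddCommGroup Q] [Module R Q] : Prop :=
  ∀ p : Ideal R, p.IsPrime → p.height ≤ 1 → ¬ annihilator R Q ≤ p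

variable {R : Type*} [CommRing R] {P Q X : Type*} [AddCommGroup P] [Module R P]
  [AddCommGroup Q] [Module R Q] [AddCommGroup X] [Module R X]

theorem mem_annihilator_quotient_range {φ : P →ₗ[R] Q} {r : R} :
    r ∈ annihilator R (Q ⧸ range φ) ↔ ∀ y, ∃ x, φ x = r • y := by
  simp [Submodule.annihilator_quotient, Submodule.mem_colon]

theorem IsPseudoNull.exists_ne_zero_mem_annihilator [IsDomain R] (h : IsPseudoNull R Q) :
    ∃ c ≠ 0, c ∈ annihilator R Q := by
  obtain ⟨c, hc, hc0⟩ := SetLike.not_le_iff_exists.1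
    (h ⊥ Ideal.isPrime_bot (Ideal.height_bot.trans_le zero_le_one))
  exact ⟨c, hc0, hc⟩

theorem IsPseudoNull.isTorsion [IsDomain R] (h : IsPseudoNull R Q) : IsTorsion R Q := by
  obtain ⟨c, hc0, hc⟩ := h.exists_ne_zero_mem_annihilator
  exact fun {x} => ⟨⟨c, mem_nonZeroDivisors_of_ne_zero hc0⟩, mem_annihilator.1 hc x⟩

theorem IsPseudoNull.of_annihilator_le (h : IsPseudoNull R P)
    (hle : annihilator R P ≤ annihilator R Q) : IsPseudoNull R Q :=
  fun p hp hht hQ => h p hp hht (hle.trans hQ)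

theorem isFiniteLength_of_forall_isMaximal [IsNoetherianRing R] [Module.Finite R Q]
    (h : ∀ p : Ideal R, p.IsPrime → annihilator R Q ≤ p → p.IsMaximal) : IsFiniteLength R Q := by
  let J := annihilator R Q
  have : Ring.KrullDimLE 0 (R ⧸ J) := .mk₀ fun q hq => by
    have hmax : (q.comap (Ideal.Quotient.mk J)).IsMaximal :=
      h _ (hq.comap _) (J.mk_ker.ge.trans (Ideal.comap_mono bot_le))
    exact Ideal.isMaximal_of_isIntegral_of_isMaximal_comap (R := R) q hmax
  have : IsArtinianRing (R ⧸ J) := IsNoetherianRing.isArtinianRing_of_krullDimLE_zero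
  let : Module (R ⧸ J) Q := Module.quotientAnnihilator
  have : IsScalarTower R (R ⧸ J) Q := .of_algebraMap_smul fun _ _ => rfl
  have : Module.Finite (R ⧸ J) Q := .of_restrictScalars_finite R _ _
  have : IsArtinian R Q :=
    isArtinian_of_surjective_algebraMap (R := R ⧸ J) Ideal.Quotient.mk_surjective
  exact isFiniteLength_iff_isNoetherian_isArtinian.2 ⟨inferInstance, this⟩

theorem IsPseudoNull.isFiniteLength [IsNoetherianRing R] [Ring.KrullDimLE 2 R] [Module.Finite R Q]
    (h : IsPseudoNull R Q) : IsFiniteLength R Q := by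
  refine isFiniteLength_of_forall_isMaximal fun p hp hQp => ?_
  obtain ⟨m, hm, hpm⟩ := p.exists_le_maximal hp.ne_top
  obtain rfl | hlt := hpm.eq_or_lt
  · exact hm
  have hp1 : 1 < p.height := not_le.1 fun hht => h p hp hht hQp
  have hm2 : m.height ≤ 2 := WithBot.coe_le_coe.1 <|
    (Ideal.height_le_ringKrullDim_of_ne_top hm.ne_top).trans (Ring.krullDimLE_iff.1 ‹_›)
  have hpm' : p.height + 1 ≤ m.height := Ideal.height_add_one_le_of_lt_of_isPrime hlt
  have : (2 : ℕ∞) + 1 ≤ 2 := calc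
    (2 : ℕ∞) + 1 ≤ p.height + 1 := by gcongr; exact Order.add_one_le_of_lt hp1
    _ ≤ 2 := hpm'.trans hm2
  exact absurd this (by decide)

theorem eq_of_comp_eq_of_isTorsion [IsDomain R] [IsTorsionFree R X] {φ : P →ₗ[R] Q}
    (hφ : IsTorsion R (Q ⧸ range φ)) {f g : Q →ₗ[R] X} (h : f ∘ₗ φ = g ∘ₗ φ) : f = g := by
  ext y
  obtain ⟨c, hc⟩ := @hφ ((range φ).mkQ y)
  obtain ⟨x, hx⟩ : c • y ∈ range φ := (Submodule.Quotient.mk_eq_zero _).1 hc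
  apply smul_right_injective X (nonZeroDivisors.ne_zero c.2)
  simpa [hx, Submonoid.smul_def] using LinearMap.congr_fun h x

theorem injective_of_injective_comp_of_isTorsion [IsDomain R] [IsTorsionFree R Q] {φ : P →ₗ[R] Q}
    (hφ : IsTorsion R (Q ⧸ range φ)) {f : Q →ₗ[R] X} (h : Function.Injective (f ∘ₗ φ)) :
    Function.Injective f := by
  refine (injective_iff_map_eq_zero f).2 fun y hy => ?_
  obtain ⟨c, hc⟩ := @hφ ((range φ).mkQ y)
  obtain ⟨x, hx⟩ : c • y ∈ range φ := (Submodule.Quotient.mk_eq_zero _).1 hc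
  have hx0 : x = 0 := (map_eq_zero_iff _ h).1 (by
    simp [hx, hy, Submonoid.smul_def])
  rw [hx0, map_zero] at hx
  exact (smul_eq_zero.1 hx.symm).resolve_left (nonZeroDivisors.ne_zero c.2)

theorem exists_smul_eq_of_forall_dvd [IsDomain R] {c : R} (hc : c ≠ 0) {f : Dual R Q}
    (h : ∀ y, c ∣ f y) : ∃ g : Dual R Q, c • g = f := by
  let e := LinearEquiv.toSpanNonzeroSingleton R R c hc
  let f' : Q →ₗ[R] Submodule.span R {c} :=
    f.codRestrict _ fun y => Ideal.mem_span_singleton.2 (h y)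
  refine ⟨e.symm ∘ₗ f', LinearMap.ext fun y => ?_⟩
  exact (mul_comm _ _).trans (congrArg Subtype.val (e.apply_symm_apply (f' y)))

end PseudoNull

section Normal

variable {R : Type*} [CommRing R] [IsDomain R] [IsNoetherianRing R] [IsIntegrallyClosed R]

theorem exists_mul_eq_mul_of_forall_mem_dvd_mul {p : Ideal R} (hp : p ≠ ⊥) {c y : R} (hc : c ≠ 0)
    (hy : ¬ c ∣ y) (h : ∀ t ∈ p, c ∣ t * y) : ∃ t ∈ p, ∃ s ∉ p, t * y = c * s := by
  by_contra! hcon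
  -- Otherwise multiplication by `y / c` preserves `p`, so `y / c` is integral.
  let i := algebraMap R (FractionRing R)
  have hinj : Function.Injective i := FaithfulSMul.algebraMap_injective R _
  have hic : i c ≠ 0 := (map_ne_zero_iff i hinj).2 hc
  have hint : IsIntegral R (i y / i c) := by
    refine isIntegral_of_smul_mem_submodule
      (Submodule.map (Algebra.linearMap R (FractionRing R)) p)
      (((Submodule.map_injective_of_injective hinj).ne hp).trans_eq (Submodule.map_bot _))
      ((IsNoetherian.noetherian p).map _) (i y / i c) ?_
    rintro _ ⟨t, ht, rfl⟩
    obtain ⟨s, hs⟩ := h t ht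
    refine ⟨s, by_contra fun hsp => hcon t ht s hsp hs, ?_⟩
    have his : i t * i y = i c * i s := by rw [← map_mul, hs, map_mul]
    rw [smul_eq_mul, div_mul_eq_mul_div, eq_div_iff hic, Algebra.linearMap_apply,
      Algebra.linearMap_apply, mul_comm (i y), his, mul_comm]
  obtain ⟨x, hx⟩ := IsIntegrallyClosed.isIntegral_iff.1 hint
  exact hy ⟨x, hinj (by rw [map_mul, hx, mul_div_cancel₀ _ hic])⟩

theorem height_le_one_of_isAssociatedPrime {c : R} (hc : c ≠ 0) {p : Ideal R}
    (hp : IsAssociatedPrime p (R ⧸ Ideal.span {c})) : p.height ≤ 1 := by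
  obtain ⟨hprime, y', hy'⟩ := isAssociatedPrime_iff.1 hp
  obtain ⟨y, rfl⟩ := Ideal.Quotient.mk_surjective y'
  have hmem (t : R) : t ∈ p ↔ c ∣ t * y := by
    rw [hy', Submodule.mem_colon_singleton, Submodule.mem_bot, Algebra.smul_def,
      Ideal.Quotient.algebraMap_eq, ← map_mul, Ideal.Quotient.eq_zero_iff_mem,
      Ideal.mem_span_singleton]
  have hcp : c ∈ p := (hmem c).2 (dvd_mul_right c y)
  have hy : ¬ c ∣ y := fun h => hprime.one_notMem ((hmem 1).2 (by rwa [one_mul]))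
  -- `t` generates `p` after localizing at `p`, since `s` becomes a unit there.
  obtain ⟨t, htp, s, hsp, hts⟩ := exists_mul_eq_mul_of_forall_mem_dvd_mul
    (fun h => hc (by rwa [h] at hcp)) hc hy fun t => (hmem t).1
  have ht (u : R) (hu : u ∈ p) : t ∣ s * u := by
    obtain ⟨v, hv⟩ := (hmem u).1 hu
    refine ⟨v, mul_left_cancel₀ hc ?_⟩
    linear_combination -u * hts + t * hv
  refine Ideal.height_le_one_of_isPrincipal_of_mem_minimalPrimes (Ideal.span {t}) p
    ⟨⟨hprime, p.span_singleton_le_iff_mem.2 htp⟩, fun q ⟨hq, htq⟩ hqp u hu => ?_⟩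
  have hsu : s * u ∈ q := htq (Ideal.mem_span_singleton.2 (ht u hu))
  exact (hq.mem_or_mem hsu).resolve_left fun hsq => hsp (hqp hsq)

theorem dvd_of_forall_mem_dvd_mul {I : Ideal R}
    (hI : ∀ p : Ideal R, p.IsPrime → p.height ≤ 1 → ¬ I ≤ p) {c x : R} (hc : c ≠ 0)
    (h : ∀ i ∈ I, c ∣ i * x) : c ∣ x := by
  by_contra hx
  obtain ⟨p, hp, hxp⟩ := exists_le_isAssociatedPrime_of_isNoetherianRing R
    (Ideal.Quotient.mk (Ideal.span {c}) x)
    (by rwa [Ne, Ideal.Quotient.eq_zero_iff_mem, Ideal.mem_span_singleton])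
  refine hI p hp.isPrime (height_le_one_of_isAssociatedPrime hc hp) fun i hi => hxp ?_
  rw [Submodule.mem_colon_singleton, Submodule.mem_bot, Algebra.smul_def,
    Ideal.Quotient.algebraMap_eq, ← map_mul, Ideal.Quotient.eq_zero_iff_mem]
  exact Ideal.mem_span_singleton.2 (h i hi)

end Normal

section DualMap

variable {R : Type*} [CommRing R] [IsDomain R] [IsNoetherianRing R] [IsIntegrallyClosed R]
  {P Q : Type*} [AddCommGroup P] [Module R P] [AddCommGroup Q] [Module R Q] {φ : P →ₗ[R] Q}

theorem bijective_dualMap_of_isPseudoNull (hφ : Function.Injective φ)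
    (h : IsPseudoNull R (Q ⧸ range φ)) : Function.Bijective φ.dualMap := by
  refine ⟨fun f f' hff' => eq_of_comp_eq_of_isTorsion h.isTorsion hff', fun g => ?_⟩
  obtain ⟨c, hc0, hc⟩ := h.exists_ne_zero_mem_annihilator
  let e := LinearEquiv.ofInjective φ hφ
  let s : Q →ₗ[R] range φ := (c • LinearMap.id).codRestrict _ (mem_annihilator_quotient_range.1 hc)
  let f : Dual R Q := g ∘ₗ e.symm.toLinearMap ∘ₗ s
  have hf {x y} (hxy : φ x = c • y) : f y = g x :=
    congrArg g (e.symm_apply_eq.2 (Subtype.ext hxy.symm))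
  have hdvd (y : Q) : c ∣ f y := dvd_of_forall_mem_dvd_mul h hc0 fun i hi => by
    obtain ⟨x, hx⟩ := mem_annihilator_quotient_range.1 hi y
    have hiy : f (i • y) = g (c • x) := hf (by rw [map_smul, hx])
    exact ⟨g x, by simpa only [map_smul, smul_eq_mul] using hiy⟩
  obtain ⟨g', hg'⟩ := exists_smul_eq_of_forall_dvd hc0 hdvd
  refine ⟨g', LinearMap.ext fun x => mul_left_cancel₀ hc0 ?_⟩
  have hφx : f (φ x) = g (c • x) := hf (map_smul φ c x)
  rw [← hg', map_smul] at hφx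
  exact hφx

theorem bijective_dualMap_dualMap_of_isPseudoNull (hφ : Function.Injective φ)
    (h : IsPseudoNull R (Q ⧸ range φ)) : Function.Bijective φ.dualMap.dualMap :=
  (LinearEquiv.ofBijective _ (bijective_dualMap_of_isPseudoNull hφ h)).dualMap.bijective

end DualMap

section Eval

variable {R : Type*} [CommRing R] {M F : Type*} [AddCommGroup M] [Module R M]
  [AddCommGroup F] [Module R F]

theorem exists_comp_eq_smul_of_free_localizedModule (S : Submonoid R) (M : Type*) [AddCommGroup M]
    [Module R M] [Module.FinitePresentation R M]
    [Module.Free (Localization S) (LocalizedModule S M)] :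
    ∃ s ∈ S, ∃ (n : ℕ) (ρ : M →ₗ[R] Fin n → R) (ι : (Fin n → R) →ₗ[R] M),
      ι ∘ₗ ρ = s • LinearMap.id := by
  let e := ((Free.chooseBasis (Localization S) (LocalizedModule S M)).reindex
    (Fintype.equivFin _)).equivFun.restrictScalars R
  let f := LocalizedModule.mkLinearMap S M
  let g (n : ℕ) : (Fin n → R) →ₗ[R] Fin n → Localization S :=
    .pi fun i => Algebra.linearMap R (Localization S) ∘ₗ .proj i
  obtain ⟨ρ, s, hρ⟩ :=
    FinitePresentation.exists_lift_of_isLocalizedModule S (g _) (e.toLinearMap ∘ₗ f)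
  obtain ⟨ι, t, hι⟩ :=
    FinitePresentation.exists_lift_of_isLocalizedModule S f (e.symm.toLinearMap ∘ₗ g _)
  have hιρ : f ∘ₗ ι ∘ₗ ρ = f ∘ₗ ((t * s : S) • LinearMap.id) := by
    rw [← comp_assoc, hι, smul_comp, comp_assoc, hρ, comp_smul, ← comp_assoc, comp_smul,
      smul_smul, e.symm_comp, id_comp, comp_id]
  obtain ⟨u, hu⟩ := Module.Finite.exists_smul_of_comp_eq_of_isLocalizedModule S f _ _ hιρ
  exact ⟨(u * (t * s) : S), (u * (t * s)).2, _, ρ, u • ι, by rw [smul_comp, hu, smul_smul]; rfl⟩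

theorem mem_annihilator_evalCoker [IsReflexive R F] {ρ : M →ₗ[R] F} {ι : F →ₗ[R] M} {s : R}
    (h : ι ∘ₗ ρ = s • LinearMap.id) : s ∈ annihilator R (evalCoker R M) := by
  refine mem_annihilator_quotient_range.2 fun ξ => ?_
  obtain ⟨y, hy⟩ := (bijective_dual_eval R F).surjective (ρ.dualMap.dualMap ξ)
  refine ⟨ι y, ?_⟩
  ext ψ
  have hψ : ρ.dualMap (ι.dualMap ψ) = s • ψ := LinearMap.ext fun x => by
    simpa using congrArg ψ (LinearMap.congr_fun h x)
  calc ψ (ι y) = ξ (ρ.dualMap (ι.dualMap ψ)) := LinearMap.congr_fun hy (ι.dualMap ψ)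
    _ = (s • ξ) ψ := by rw [hψ, map_smul, LinearMap.smul_apply]

variable [IsDomain R] [IsNoetherianRing R] [Module.Finite R M] [IsTorsionFree R M]

variable (R M) in
theorem injective_eval_of_isTorsionFree : Function.Injective (Dual.eval R M) := by
  have : Module.Free (Localization R⁰) (LocalizedModule R⁰ M) :=
    inferInstanceAs (Module.Free (FractionRing R) _)
  have := finitePresentation_of_finite R M
  obtain ⟨s, hs, n, ρ, ι, h⟩ := exists_comp_eq_smul_of_free_localizedModule R⁰ M
  have hρ : Function.Injective ρ := .of_comp (f := ι) <| by
    rw [← coe_comp, h]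
    exact smul_right_injective M (nonZeroDivisors.ne_zero hs)
  have hcomp : Function.Injective (ρ.dualMap.dualMap ∘ₗ Dual.eval R M) := by
    rw [Dual.eval_naturality]
    exact (bijective_dual_eval R (Fin n → R)).injective.comp hρ
  exact .of_comp (f := ρ.dualMap.dualMap) hcomp

variable [IsIntegrallyClosed R]

theorem isPrincipalIdealRing_localization_of_height_le_one {p : Ideal R} [p.IsPrime]
    (hp : p.height ≤ 1) : IsPrincipalIdealRing (Localization.AtPrime p) := by
  have : Ring.KrullDimLE 1 (Localization.AtPrime p) := by
    rw [Ring.krullDimLE_iff, IsLocalization.AtPrime.ringKrullDim_eq_height p]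
    exact WithBot.coe_le_coe.2 hp
  have : IsIntegrallyClosed (Localization.AtPrime p) :=
    isIntegrallyClosed_of_isLocalization _ p.primeCompl p.primeCompl_le_nonZeroDivisors
  have hmax (q : Ideal (Localization.AtPrime p)) (hq0 : q ≠ ⊥) (hq : q.IsPrime) :
      q = maximalIdeal (Localization.AtPrime p) := eq_maximalIdeal (hq.isMaximal_of_ne_bot hq0)
  exact ((tfae_of_isNoetherianRing_of_isLocalRing_of_isDomain _).out 3 0).1 (And.intro this hmax)

variable (R M) in
theorem isPseudoNull_evalCoker : IsPseudoNull R (evalCoker R M) := by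
  intro p hp hht hle
  have := isPrincipalIdealRing_localization_of_height_le_one hht
  have := finitePresentation_of_finite R M
  obtain ⟨s, hs, n, ρ, ι, h⟩ := exists_comp_eq_smul_of_free_localizedModule p.primeCompl M
  exact hs (hle (mem_annihilator_evalCoker h))

end Eval

section BidualExactness

variable {R : Type*} [CommRing R] {A M B N P Q : Type*} [AddCommGroup A] [Module R A]
  [AddCommGroup M] [Module R M] [AddCommGroup B] [Module R B] [AddCommGroup N] [Module R N]
  [AddCommGroup P] [Module R P] [AddCommGroup Q] [Module R Q]

/-- The map `P^{∨∨}/P → Q^{∨∨}/Q` induced by the bidual of `φ : P → Q`. -/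
def evalCokerMap (φ : P →ₗ[R] Q) : evalCoker R P →ₗ[R] evalCoker R Q :=
  (range (Dual.eval R P)).mapQ (range (Dual.eval R Q)) φ.dualMap.dualMap <| by
    rintro _ ⟨x, rfl⟩
    exact ⟨φ x, rfl⟩

theorem eq_evalCokerMap {φ : P →ₗ[R] Q} {f : evalCoker R P →ₗ[R] evalCoker R Q}
    (hf : f ∘ₗ (range (Dual.eval R P)).mkQ =
      (range (Dual.eval R Q)).mkQ ∘ₗ φ.dualMap.dualMap) : f = evalCokerMap φ :=
  Submodule.linearMap_qext _ hf

theorem injective_of_comp_mkQ_eq_mkQ_torsion {A : Submodule R M} [IsTorsionFree R (M ⧸ A)]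
    {j : M →ₗ[R] Q} (hj : Function.Injective j)
    {β : (M ⧸ A) →ₗ[R] (Q ⧸ A.map j) ⧸ Submodule.torsion R (Q ⧸ A.map j)}
    (hβ : β ∘ₗ A.mkQ = (Submodule.torsion R (Q ⧸ A.map j)).mkQ ∘ₗ (A.map j).mkQ ∘ₗ j) :
    Function.Injective β := by
  refine (injective_iff_map_eq_zero β).2 fun y hy => ?_
  obtain ⟨m, rfl⟩ := A.mkQ_surjective y
  have hm : (A.map j).mkQ (j m) ∈ Submodule.torsion R (Q ⧸ A.map j) :=
    (Submodule.Quotient.mk_eq_zero _).1 ((LinearMap.congr_fun hβ m).symm.trans hy)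
  obtain ⟨r, hr⟩ := (Submodule.mem_torsion_iff _).1 hm
  obtain ⟨a, ha, hra⟩ : r • j m ∈ A.map j := (Submodule.Quotient.mk_eq_zero _).1 hr
  obtain rfl : a = r • m := hj (hra.trans (map_smul_of_tower j r m).symm)
  have hrm : (r : R) • A.mkQ m = (r : R) • (0 : M ⧸ A) := by
    rw [smul_zero, ← map_smul]
    exact (Submodule.Quotient.mk_eq_zero A).2 ha
  exact (isRegular_iff_mem_nonZeroDivisors.2 r.2).isSMulRegular hrm

variable {i : A →ₗ[R] M} {q : M →ₗ[R] B}

theorem isPseudoNull_ker_quotient_range {k : M →ₗ[R] P} {f : P →ₗ[R] Q} {j : A →ₗ[R] ker f}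
    (hk : IsPseudoNull R (P ⧸ range k)) (hex : Function.Exact i (f ∘ₗ k))
    (hj : (ker f).subtype ∘ₗ j = k ∘ₗ i) : IsPseudoNull R (ker f ⧸ range j) := by
  refine hk.of_annihilator_le fun c hc => mem_annihilator_quotient_range.2 fun ⟨y, hy⟩ => ?_
  obtain ⟨m, hm⟩ := mem_annihilator_quotient_range.1 hc y
  obtain ⟨a, rfl⟩ := (hex m).1 (by rw [comp_apply, hm, map_smul, hy, smul_zero])
  exact ⟨a, Subtype.ext ((LinearMap.congr_fun hj a).trans hm)⟩

variable [IsDomain R] [IsNoetherianRing R] [IsIntegrallyClosed R]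

theorem range_le_range_dualMap_dualMap {φ : A →ₗ[R] P} {l : P →ₗ[R] Dual R (Dual R M)}
    (hφ : Function.Injective φ) (hnull : IsPseudoNull R (P ⧸ range φ))
    (hl : l ∘ₗ φ = Dual.eval R M ∘ₗ i) : range l ≤ range i.dualMap.dualMap := by
  rintro _ ⟨x, rfl⟩
  obtain ⟨η, hη⟩ := (bijective_dualMap_dualMap_of_isPseudoNull hφ hnull).surjective
    (Dual.eval R P x)
  refine ⟨η, LinearMap.ext fun ψ => ?_⟩
  have hψ : i.dualMap ψ = φ.dualMap (Dual.eval R _ ψ ∘ₗ l) :=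
    LinearMap.ext fun a => (LinearMap.congr_fun (LinearMap.congr_fun hl a) ψ).symm
  calc η (i.dualMap ψ) = η (φ.dualMap (Dual.eval R _ ψ ∘ₗ l)) := congrArg η hψ
    _ = l x ψ := LinearMap.congr_fun hη _

theorem map_ker_le_range_dualMap_dualMap {k : M →ₗ[R] P} {f : P →ₗ[R] Q}
    {l : P →ₗ[R] Dual R (Dual R M)} (hk : Function.Injective k)
    (hnull : IsPseudoNull R (P ⧸ range k)) (hi : Function.Injective i)
    (hex : Function.Exact i (f ∘ₗ k)) (hl : l ∘ₗ k = Dual.eval R M) :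
    (ker f).map l ≤ range i.dualMap.dualMap := by
  let j : A →ₗ[R] ker f := (k ∘ₗ i).codRestrict (ker f) hex.apply_apply_eq_zero
  have hj : Function.Injective j := fun a a' h => hi (hk (congrArg Subtype.val h))
  have hle := range_le_range_dualMap_dualMap (i := i) (l := l ∘ₗ (ker f).subtype) hj
    (isPseudoNull_ker_quotient_range hnull hex rfl) (by rw [← hl]; rfl)
  rwa [range_comp, Submodule.range_subtype] at hle

variable [Module.Finite R M] [IsTorsionFree R M]

theorem injective_dualMap_dualMap [Module.Finite R A] [IsTorsionFree R A]
    (hi : Function.Injective i) : Function.Injective i.dualMap.dualMap := by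
  refine injective_of_injective_comp_of_isTorsion (isPseudoNull_evalCoker R A).isTorsion ?_
  rw [Dual.eval_naturality]
  exact (injective_eval_of_isTorsionFree R M).comp hi

section

variable [Module.Finite R B] [IsTorsionFree R B]

theorem exact_dualMap_dualMap (hi : Function.Injective i) (hiq : Function.Exact i q) :
    Function.Exact i.dualMap.dualMap q.dualMap.dualMap := by
  have hex : Function.Exact i (q.dualMap.dualMap ∘ₗ Dual.eval R M) := by
    rw [Dual.eval_naturality]
    exact hiq.comp_injective _ (injective_eval_of_isTorsionFree R B) (map_zero _)
  refine fun ξ => ⟨fun hξ => ?_, ?_⟩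
  · exact map_ker_le_range_dualMap_dualMap (l := LinearMap.id) (injective_eval_of_isTorsionFree R M)
      (isPseudoNull_evalCoker R M) hi hex (id_comp _) ⟨ξ, hξ, rfl⟩
  · rintro ⟨η, rfl⟩
    ext ψ
    have hψ : i.dualMap (q.dualMap ψ) = 0 := LinearMap.ext fun a => by
      simp [hiq.apply_apply_eq_zero]
    exact (congrArg η hψ).trans (map_zero η)

theorem injective_evalCokerMap [Module.Finite R A] [IsTorsionFree R A]
    (hi : Function.Injective i) (hiq : Function.Exact i q) :
    Function.Injective (evalCokerMap i) := by
  refine (injective_iff_map_eq_zero _).2 fun y hy => ?_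
  obtain ⟨η, rfl⟩ := Submodule.mkQ_surjective _ y
  obtain ⟨m, hm⟩ : i.dualMap.dualMap η ∈ range (Dual.eval R M) :=
    (Submodule.Quotient.mk_eq_zero _).1 hy
  have hqm : Dual.eval R B (q m) = 0 := calc
    Dual.eval R B (q m) = q.dualMap.dualMap (i.dualMap.dualMap η) := by rw [← hm]; rfl
    _ = 0 := (exact_dualMap_dualMap hi hiq).apply_apply_eq_zero η
  obtain ⟨a, rfl⟩ := (hiq m).1 ((map_eq_zero_iff _ (injective_eval_of_isTorsionFree R B)).1 hqm)
  exact (Submodule.Quotient.mk_eq_zero _).2 ⟨a, injective_dualMap_dualMap hi hm⟩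

theorem exact_evalCokerMap_of_exact (hi : Function.Injective i) (hiq : Function.Exact i q)
    (hq : Function.Surjective q) : Function.Exact (evalCokerMap i) (evalCokerMap q) := by
  have hex := exact_dualMap_dualMap hi hiq
  intro y
  obtain ⟨ξ, rfl⟩ := Submodule.mkQ_surjective _ y
  refine ⟨fun hξ => ?_, ?_⟩
  · obtain ⟨b, hb⟩ : q.dualMap.dualMap ξ ∈ range (Dual.eval R B) :=
      (Submodule.Quotient.mk_eq_zero _).1 hξ
    obtain ⟨m, rfl⟩ := hq b
    obtain ⟨η, hη⟩ := (hex (ξ - Dual.eval R M m)).1 (by rw [map_sub, ← hb]; exact sub_self _)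
    refine ⟨(range (Dual.eval R A)).mkQ η, (Submodule.Quotient.eq _).2 ⟨-m, ?_⟩⟩
    rw [hη, map_neg, sub_sub_cancel_left]
  · rintro ⟨x, hx⟩
    obtain ⟨η, rfl⟩ := Submodule.mkQ_surjective _ x
    rw [← hx]
    exact congrArg (range (Dual.eval R B)).mkQ (hex.apply_apply_eq_zero η)

end

variable {π : Dual R (Dual R M) →ₗ[R] N} {β : B →ₗ[R] N}

theorem bijective_dualMap_dualMap_of_comp_eq (hπ : Function.Surjective π)
    (hβ : Function.Injective β) (hβπ : β ∘ₗ q = π ∘ₗ Dual.eval R M) :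
    Function.Bijective β.dualMap.dualMap := by
  refine bijective_dualMap_dualMap_of_isPseudoNull hβ <|
    (isPseudoNull_evalCoker R M).of_annihilator_le fun c hc =>
      mem_annihilator_quotient_range.2 fun n => ?_
  obtain ⟨ξ, rfl⟩ := hπ n
  obtain ⟨m, hm⟩ := mem_annihilator_quotient_range.1 hc ξ
  exact ⟨q m, by rw [← map_smul, ← hm]; exact LinearMap.congr_fun hβπ m⟩

theorem dualMap_dualMap_comp_eq_eval_comp (hβπ : β ∘ₗ q = π ∘ₗ Dual.eval R M) :
    β.dualMap.dualMap ∘ₗ q.dualMap.dualMap = Dual.eval R N ∘ₗ π := by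
  refine eq_of_comp_eq_of_isTorsion (isPseudoNull_evalCoker R M).isTorsion
    (LinearMap.ext fun m => ?_)
  exact congrArg (Dual.eval R N) (LinearMap.congr_fun hβπ m)

theorem exact_evalCokerMap_of_comp_eq (hπ : Function.Surjective π)
    (hβ : Function.Injective β) (hβπ : β ∘ₗ q = π ∘ₗ Dual.eval R M) :
    Function.Exact (evalCokerMap q) (evalCokerMap β) := by
  have hcomp := LinearMap.congr_fun (dualMap_dualMap_comp_eq_eval_comp hβπ)
  intro y
  obtain ⟨ζ, rfl⟩ := Submodule.mkQ_surjective _ y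
  refine ⟨fun hζ => ?_, ?_⟩
  · obtain ⟨n, hn⟩ : β.dualMap.dualMap ζ ∈ range (Dual.eval R N) :=
      (Submodule.Quotient.mk_eq_zero _).1 hζ
    obtain ⟨ξ, rfl⟩ := hπ n
    have hξ : q.dualMap.dualMap ξ = ζ :=
      (bijective_dualMap_dualMap_of_comp_eq hπ hβ hβπ).injective ((hcomp ξ).trans hn)
    exact ⟨(range (Dual.eval R M)).mkQ ξ, congrArg (range (Dual.eval R B)).mkQ hξ⟩
  · rintro ⟨x, hx⟩
    obtain ⟨ξ, rfl⟩ := Submodule.mkQ_surjective _ x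
    rw [← hx]
    exact (Submodule.Quotient.mk_eq_zero _).2 ⟨π ξ, (hcomp ξ).symm⟩

theorem surjective_evalCokerMap_of_comp_eq (hπ : Function.Surjective π)
    (hβ : Function.Injective β) (hβπ : β ∘ₗ q = π ∘ₗ Dual.eval R M) :
    Function.Surjective (evalCokerMap β) := by
  intro y
  obtain ⟨ξ, rfl⟩ := Submodule.mkQ_surjective _ y
  obtain ⟨ζ, rfl⟩ := (bijective_dualMap_dualMap_of_comp_eq hπ hβ hβπ).surjective ξ
  exact ⟨(range (Dual.eval R B)).mkQ ζ, rfl⟩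

theorem evalCoker_exact_sequence [Module.Finite R A] [IsTorsionFree R A] [Module.Finite R B]
    [IsTorsionFree R B] (hi : Function.Injective i) (hiq : Function.Exact i q)
    (hq : Function.Surjective q) (hπ : Function.Surjective π) (hβ : Function.Injective β)
    (hβπ : β ∘ₗ q = π ∘ₗ Dual.eval R M)
    {f₁ : evalCoker R A →ₗ[R] evalCoker R M} {f₂ : evalCoker R M →ₗ[R] evalCoker R B}
    {f₃ : evalCoker R B →ₗ[R] evalCoker R N}
    (hf₁ : f₁ ∘ₗ (range (Dual.eval R A)).mkQ =
      (range (Dual.eval R M)).mkQ ∘ₗ i.dualMap.dualMap)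
    (hf₂ : f₂ ∘ₗ (range (Dual.eval R M)).mkQ =
      (range (Dual.eval R B)).mkQ ∘ₗ q.dualMap.dualMap)
    (hf₃ : f₃ ∘ₗ (range (Dual.eval R B)).mkQ =
      (range (Dual.eval R N)).mkQ ∘ₗ β.dualMap.dualMap) :
    Function.Injective f₁ ∧ range f₁ = ker f₂ ∧ range f₂ = ker f₃ ∧ Function.Surjective f₃ := by
  obtain rfl := eq_evalCokerMap hf₁
  obtain rfl := eq_evalCokerMap hf₂
  obtain rfl := eq_evalCokerMap hf₃
  exact ⟨injective_evalCokerMap hi hiq,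
    (exact_evalCokerMap_of_exact hi hiq hq).linearMap_ker_eq.symm,
    (exact_evalCokerMap_of_comp_eq hπ hβ hβπ).linearMap_ker_eq.symm,
    surjective_evalCokerMap_of_comp_eq hπ hβ hβπ⟩

end BidualExactness

theorem stmt_2_general {R : Type*} [CommRing R] [IsDomain R] [IsNoetherianRing R]
    [IsIntegrallyClosed R] [Ring.KrullDimLE 2 R]
    {M : Type*} [AddCommGroup M] [Module R M] [Module.Finite R M]
    (htfM : Submodule.torsion R M = ⊥)
    (A : Submodule R M)
    (htfB : Submodule.torsion R (M ⧸ A) = ⊥)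
    (β : (M ⧸ A) →ₗ[R]
      ((Dual R (Dual R M) ⧸ A.map (Module.Dual.eval R M)) ⧸
        Submodule.torsion R (Dual R (Dual R M) ⧸ A.map (Module.Dual.eval R M))))
    (hβ : β ∘ₗ A.mkQ =
      (Submodule.torsion R
          (Dual R (Dual R M) ⧸ A.map (Module.Dual.eval R M))).mkQ ∘ₗ
        (A.map (Module.Dual.eval R M)).mkQ ∘ₗ Module.Dual.eval R M)
    (f₁ : evalCoker R ↥A →ₗ[R] evalCoker R M)
    (hf₁ : f₁ ∘ₗ (LinearMap.range (Module.Dual.eval R ↥A)).mkQ =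
      (LinearMap.range (Module.Dual.eval R M)).mkQ ∘ₗ A.subtype.dualMap.dualMap)
    (f₂ : evalCoker R M →ₗ[R] evalCoker R (M ⧸ A))
    (hf₂ : f₂ ∘ₗ (LinearMap.range (Module.Dual.eval R M)).mkQ =
      (LinearMap.range (Module.Dual.eval R (M ⧸ A))).mkQ ∘ₗ A.mkQ.dualMap.dualMap)
    (f₃ : evalCoker R (M ⧸ A) →ₗ[R]
      evalCoker R
        ((Dual R (Dual R M) ⧸ A.map (Module.Dual.eval R M)) ⧸
          Submodule.torsion R (Dual R (Dual R M) ⧸ A.map (Module.Dual.eval R M))))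
    (hf₃ : f₃ ∘ₗ (LinearMap.range (Module.Dual.eval R (M ⧸ A))).mkQ =
      (LinearMap.range (Module.Dual.eval R
          ((Dual R (Dual R M) ⧸ A.map (Module.Dual.eval R M)) ⧸
            Submodule.torsion R
              (Dual R (Dual R M) ⧸ A.map (Module.Dual.eval R M))))).mkQ ∘ₗ
        β.dualMap.dualMap) :
    Function.Injective β ∧
    IsFiniteLength R (evalCoker R ↥A) ∧
    IsFiniteLength R (evalCoker R M) ∧
    IsFiniteLength R (evalCoker R (M ⧸ A)) ∧
    IsFiniteLength R (evalCoker R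
      ((Dual R (Dual R M) ⧸ A.map (Module.Dual.eval R M)) ⧸
        Submodule.torsion R (Dual R (Dual R M) ⧸ A.map (Module.Dual.eval R M)))) ∧
    Function.Injective f₁ ∧
    LinearMap.range f₁ = LinearMap.ker f₂ ∧
    LinearMap.range f₂ = LinearMap.ker f₃ ∧
    Function.Surjective f₃ := by
  have : IsTorsionFree R M := Submodule.isTorsionFree_iff_torsion_eq_bot.2 htfM
  have : IsTorsionFree R (M ⧸ A) := Submodule.isTorsionFree_iff_torsion_eq_bot.2 htfB
  have hβinj : Function.Injective β :=
    injective_of_comp_mkQ_eq_mkQ_torsion (injective_eval_of_isTorsionFree R M) hβ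
  let π := (Submodule.torsion R (Dual R (Dual R M) ⧸ A.map (Dual.eval R M))).mkQ ∘ₗ
    (A.map (Dual.eval R M)).mkQ
  have hπ : Function.Surjective π :=
    (Submodule.mkQ_surjective _).comp (Submodule.mkQ_surjective _)
  exact ⟨hβinj, (isPseudoNull_evalCoker R A).isFiniteLength,
    (isPseudoNull_evalCoker R M).isFiniteLength,
    (isPseudoNull_evalCoker R (M ⧸ A)).isFiniteLength,
    (isPseudoNull_evalCoker R _).isFiniteLength,
    evalCoker_exact_sequence A.subtype_injective (exact_subtype_mkQ A) A.mkQ_surjective hπ hβinj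
      hβ hf₁ hf₂ hf₃⟩

theorem stmt_2 {R : Type*} [CommRing R] [IsDomain R] [IsNoetherianRing R] [IsLocalRing R]
    -- `R` is a regular local ring of Krull dimension 2: the Krull dimension is 2 and the
    -- maximal ideal is generated by 2 elements
    (hdim : ringKrullDim R = 2)
    (hreg : ∃ a b : R, Ideal.span {a, b} = IsLocalRing.maximalIdeal R)
    {M : Type*} [AddCommGroup M] [Module R M] [Module.Finite R M]
    -- `M` is torsion-free of rank 2
    (htfM : Submodule.torsion R M = ⊥)
    (hrkM : Module.finrank (FractionRing R) (LocalizedModule (nonZeroDivisors R) M) = 2)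
    -- `A ⊆ M` is a submodule of rank 1
    (A : Submodule R M)
    (hrkA : Module.finrank (FractionRing R) (LocalizedModule (nonZeroDivisors R) ↥A) = 1)
    -- the quotient `B := M ⧸ A` is torsion-free
    (htfB : Submodule.torsion R (M ⧸ A) = ⊥)
    -- `β : B → N` is the map induced by `ε_M : M → M^{∨∨}`, where `A` is regarded as a
    -- submodule of `M^{∨∨}` via `ε_M` and `N := (M^{∨∨}/A)/Tors(M^{∨∨}/A)`
    (β : (M ⧸ A) →ₗ[R]
      ((Dual R (Dual R M) ⧸ A.map (Module.Dual.eval R M)) ⧸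
        Submodule.torsion R (Dual R (Dual R M) ⧸ A.map (Module.Dual.eval R M))))
    (hβ : β ∘ₗ A.mkQ =
      (Submodule.torsion R
          (Dual R (Dual R M) ⧸ A.map (Module.Dual.eval R M))).mkQ ∘ₗ
        (A.map (Module.Dual.eval R M)).mkQ ∘ₗ Module.Dual.eval R M)
    -- `f₁ : A^{∨∨}/A → M^{∨∨}/M` is induced by the bidual of the inclusion `A → M`
    (f₁ : evalCoker R ↥A →ₗ[R] evalCoker R M)
    (hf₁ : f₁ ∘ₗ (LinearMap.range (Module.Dual.eval R ↥A)).mkQ =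
      (LinearMap.range (Module.Dual.eval R M)).mkQ ∘ₗ A.subtype.dualMap.dualMap)
    -- `f₂ : M^{∨∨}/M → B^{∨∨}/B` is induced by the bidual of the projection `M → B`
    (f₂ : evalCoker R M →ₗ[R] evalCoker R (M ⧸ A))
    (hf₂ : f₂ ∘ₗ (LinearMap.range (Module.Dual.eval R M)).mkQ =
      (LinearMap.range (Module.Dual.eval R (M ⧸ A))).mkQ ∘ₗ A.mkQ.dualMap.dualMap)
    -- `f₃ : B^{∨∨}/B → N^{∨∨}/N` is induced by the bidual of `β`
    (f₃ : evalCoker R (M ⧸ A) →ₗ[R]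
      evalCoker R
        ((Dual R (Dual R M) ⧸ A.map (Module.Dual.eval R M)) ⧸
          Submodule.torsion R (Dual R (Dual R M) ⧸ A.map (Module.Dual.eval R M))))
    (hf₃ : f₃ ∘ₗ (LinearMap.range (Module.Dual.eval R (M ⧸ A))).mkQ =
      (LinearMap.range (Module.Dual.eval R
          ((Dual R (Dual R M) ⧸ A.map (Module.Dual.eval R M)) ⧸
            Submodule.torsion R
              (Dual R (Dual R M) ⧸ A.map (Module.Dual.eval R M))))).mkQ ∘ₗ
        β.dualMap.dualMap) :
    -- conclusion: `β` is injective, the four cokernels have finite length, and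
    -- `0 → A^{∨∨}/A → M^{∨∨}/M → B^{∨∨}/B → N^{∨∨}/N → 0` is exact
    Function.Injective β ∧
    IsFiniteLength R (evalCoker R ↥A) ∧
    IsFiniteLength R (evalCoker R M) ∧
    IsFiniteLength R (evalCoker R (M ⧸ A)) ∧
    IsFiniteLength R (evalCoker R
      ((Dual R (Dual R M) ⧸ A.map (Module.Dual.eval R M)) ⧸
        Submodule.torsion R (Dual R (Dual R M) ⧸ A.map (Module.Dual.eval R M)))) ∧
    Function.Injective f₁ ∧
    LinearMap.range f₁ = LinearMap.ker f₂ ∧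
    LinearMap.range f₂ = LinearMap.ker f₃ ∧
    Function.Surjective f₃ := by
  obtain ⟨a, b, hab⟩ := hreg
  have : Ring.KrullDimLE 2 R := Ring.krullDimLE_iff.2 hdim.le
  have hht : 1 < (maximalIdeal R).height := by
    rw [← WithBot.coe_lt_coe, maximalIdeal_height_eq_ringKrullDim, hdim]
    exact Nat.one_lt_ofNat
  have := uniqueFactorizationMonoid_of_span_pair_eq_maximalIdeal hht hab
  exact stmt_2_general htfM A htfB β hβ f₁ hf₁ f₂ hf₂ f₃ hf₃
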